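/- Let (R, m) be a Noetherian local ring such that R is not m-adically complete or dim R ≥ 2. Then there exists an injective envelope i : M → I of R-modules with M Matlis reflexive and I not Matlis reflexive; for such an i, the Matlis dual i^∨ is a flat cover but (i^∨)^∨ is not an injective envelope. -/

import Mathlib

universe u

variable (R : Type u) [CommRing R]

/-- A morphism `f : F → M` with `F` flat is a flat precover if every morphism from a
flat module to `M` factors through `f`. -/
def IsFlatPrecover {F M : Type u} [AddCommGroup F] [AddCommGroup M] [Module R F]
    [Module R M] (f : F →ₗ[R] M) : Prop :=
  Module.Flat R F ∧
    ∀ (F' : Type u) [AddCommGroup F'] [Module R F'], Module.Flat R F' →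
      ∀ g : F' →ₗ[R] M, ∃ h : F' →ₗ[R] F, f ∘ₗ h = g

/-- A flat precover `f : F → M` is a flat cover if every `h : F → F` with `f ∘ h = f`
is an automorphism. -/
def IsFlatCover {F M : Type u} [AddCommGroup F] [AddCommGroup M] [Module R F]
    [Module R M] (f : F →ₗ[R] M) : Prop :=
  IsFlatPrecover R f ∧ ∀ h : F →ₗ[R] F, f ∘ₗ h = f → Function.Bijective h

/-- A morphism `i : M → E` is an injective envelope if `E` is injective, `i` is
injective, and the image of `i` is an essential submodule of `E`. -/
def IsInjectiveEnvelope {M E : Type u} [AddCommGroup M] [AddCommGroup E] [Module R M]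
    [Module R E] (i : M →ₗ[R] E) : Prop :=
  Module.Injective R E ∧ Function.Injective i ∧
    ∀ N : Submodule R E, N ≠ ⊥ → N ⊓ LinearMap.range i ≠ ⊥

/-- An injective cogenerator is an injective module `E` such that `Hom(N, E) ≠ 0`
for every nonzero module `N`. -/
def IsInjectiveCogenerator (E : Type u) [AddCommGroup E] [Module R E] : Prop :=
  Module.Injective R E ∧
    ∀ (N : Type u) [AddCommGroup N] [Module R N], (∃ x : N, x ≠ 0) →
      ∃ g : N →ₗ[R] E, g ≠ 0

/-- Given a module `D` (to be thought of as `⊕ E(R/𝔫)`, the direct sum of injective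
envelopes of the residue fields of all maximal ideals, so that `Hom_R(-, D)` is the
Matlis dual), a module `M` is Matlis reflexive if the evaluation map
`M → Hom_R(Hom_R(M, D), D)` is an isomorphism. -/
def IsMatlisReflexive (D : Type u) [AddCommGroup D] [Module R D]
    (M : Type u) [AddCommGroup M] [Module R M] : Prop :=
  Function.Bijective (LinearMap.applyₗ : M →ₗ[R] ((M →ₗ[R] D) →ₗ[R] D))

section Helpers
variable {R}

/-- Extension/factorisation through an injective module. -/
theorem inj_factor {E X Y : Type u} [AddCommGroup E] [Module R E] [AddCommGroup X] [Module R X]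
    [AddCommGroup Y] [Module R Y] (hE : Module.Injective R E) (g : X →ₗ[R] Y) (f : X →ₗ[R] E)
    (h : ∀ x, g x = 0 → f x = 0) : ∃ k : Y →ₗ[R] E, ∀ x, k (g x) = f x := by
  obtain ⟨k, hk⟩ := hE.out ((LinearMap.ker g).liftQ g le_rfl)
    (by rw [← LinearMap.ker_eq_bot]; exact Submodule.ker_liftQ_eq_bot _ _ _ le_rfl)
    ((LinearMap.ker g).liftQ f (fun x hx => h x hx))
  refine ⟨k, fun x => ?_⟩
  exact hk (Submodule.Quotient.mk x)

/-- Separation of points. -/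
def SepPts (R : Type u) [CommRing R] (E : Type u) [AddCommGroup E] [Module R E] : Prop :=
  ∀ (N : Type u) [AddCommGroup N] [Module R N] (x : N), x ≠ 0 → ∃ g : N →ₗ[R] E, g x ≠ 0

theorem sep_sub {E N : Type u} [AddCommGroup E] [Module R E] [AddCommGroup N] [Module R N]
    (hS : SepPts R E) (L : Submodule R N) (x : N) (h : ∀ g : N →ₗ[R] E, (∀ y ∈ L, g y = 0) → g x = 0) :
    x ∈ L := by
  by_contra hx
  obtain ⟨g, hg⟩ := hS (N ⧸ L) (L.mkQ x) (by simpa using hx)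
  exact hg (h (g ∘ₗ L.mkQ) (fun y hy => by simp [(Submodule.Quotient.mk_eq_zero L).2 hy]))

theorem refl_iff {E M : Type u} [AddCommGroup E] [Module R E] [AddCommGroup M] [Module R M]
    (hS : SepPts R E) : IsMatlisReflexive R E M ↔
      ∀ φ : (M →ₗ[R] E) →ₗ[R] E, ∃ m : M, ∀ f, φ f = f m := by
  constructor
  · intro h φ
    obtain ⟨m, hm⟩ := h.2 φ
    exact ⟨m, fun f => by rw [← hm]; rfl⟩
  · intro h
    refine ⟨?_, fun φ => ?_⟩
    · rw [injective_iff_map_eq_zero]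
      intro m hm
      by_contra hne
      obtain ⟨g, hg⟩ := hS M m hne
      exact hg (by simpa using LinearMap.congr_fun hm g)
    · obtain ⟨m, hm⟩ := h φ
      exact ⟨m, LinearMap.ext fun f => (hm f).symm⟩

theorem refl_surj {E M N : Type u} [AddCommGroup E] [Module R E] [AddCommGroup M] [Module R M]
    [AddCommGroup N] [Module R N] (hE : Module.Injective R E) (hS : SepPts R E)
    (hM : IsMatlisReflexive R E M) (g : M →ₗ[R] N) (hg : Function.Surjective g) :
    IsMatlisReflexive R E N := by
  rw [refl_iff hS] at hM ⊢
  intro φ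
  obtain ⟨ψ, hψ⟩ := inj_factor hE (LinearMap.lcomp R E g) φ (fun f hf => by
    have : f = 0 := by
      ext y
      obtain ⟨x, rfl⟩ := hg y
      exact LinearMap.congr_fun hf x
    simp [this])
  obtain ⟨m, hm⟩ := hM ψ
  exact ⟨g m, fun f => by rw [← hψ, hm]; rfl⟩

theorem refl_ext {E M : Type u} [AddCommGroup E] [Module R E] [AddCommGroup M] [Module R M]
    (hE : Module.Injective R E) (hS : SepPts R E) (N : Submodule R M)
    (hN : IsMatlisReflexive R E N) (hQ : IsMatlisReflexive R E (M ⧸ N)) :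
    IsMatlisReflexive R E M := by
  rw [refl_iff hS] at hN hQ ⊢
  intro φ
  obtain ⟨q, hq⟩ := hQ (φ ∘ₗ LinearMap.lcomp R E N.mkQ)
  obtain ⟨m, rfl⟩ := N.mkQ_surjective q
  obtain ⟨ψ, hψ⟩ := inj_factor hE (LinearMap.lcomp R E N.subtype) (φ - LinearMap.applyₗ m)
    (fun f hf => by
      have hN : N ≤ LinearMap.ker f := fun y hy => LinearMap.congr_fun hf ⟨y, hy⟩
      have h1 := hq (N.liftQ f hN)
      have h2 : (LinearMap.lcomp R E N.mkQ) (N.liftQ f hN) = f := by ext; simp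
      rw [LinearMap.comp_apply, h2] at h1
      simp [h1])
  obtain ⟨n, hn⟩ := hN ψ
  refine ⟨m + n, fun f => ?_⟩
  have h1 := hψ f
  rw [hn] at h1
  simp at h1
  rw [map_add, h1]; abel

theorem refl_of_dual {E M : Type u} [AddCommGroup E] [Module R E] [AddCommGroup M] [Module R M]
    (hS : SepPts R E) (hM : IsMatlisReflexive R E (M →ₗ[R] E)) :
    IsMatlisReflexive R E M := by
  rw [refl_iff hS] at hM ⊢
  intro φ
  have : φ ∈ LinearMap.range (LinearMap.applyₗ : M →ₗ[R] ((M →ₗ[R] E) →ₗ[R] E)) := by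
    apply sep_sub hS
    intro g hg
    obtain ⟨f, hf⟩ := hM g
    have : f = 0 := by
      ext m
      have := hg _ ⟨m, rfl⟩
      rw [hf] at this
      simpa using this
    rw [hf, this]; simp
  obtain ⟨m, hm⟩ := this
  exact ⟨m, fun f => by rw [← hm]; rfl⟩

/-- Sequential linear compactness of reflexive modules. -/
theorem refl_lc {E M : Type u} [AddCommGroup E] [Module R E] [AddCommGroup M] [Module R M]
    (hE : Module.Injective R E) (hS : SepPts R E) (hM : IsMatlisReflexive R E M)
    (L : ℕ → Submodule R M) (hL : Antitone L) (c : ℕ → M) (hc : ∀ n, c (n + 1) - c n ∈ L n) :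
    ∃ x, ∀ n, x - c n ∈ L n := by
  rw [refl_iff hS] at hM
  have hc' : ∀ n k, c (n + k) - c n ∈ L n := by
    intro n k
    induction k with
    | zero => simp
    | succ k ih =>
      have := (L n).add_mem (hL (Nat.le_add_right n k) (hc (n + k))) ih
      rw [← add_assoc]
      convert this using 1
      abel
  let A : ℕ → Submodule R (M →ₗ[R] E) := fun n =>
    { carrier := {f | ∀ y ∈ L n, f y = 0}
      add_mem' := fun ha hb y hy => by simp [ha y hy, hb y hy]
      zero_mem' := by simp
      smul_mem' := fun r a ha y hy => by simp [ha y hy] }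
  have hA : ∀ n f, f ∈ A n ↔ ∀ y ∈ L n, f y = 0 := fun _ _ => Iff.rfl
  -- the set of partial functionals
  let T : ℕ → ((M →ₗ[R] E) →ₗ.[R] E) := fun n => ⟨A n, (LinearMap.applyₗ (c n)) ∘ₗ (A n).subtype⟩
  have hT : Monotone T := by
    intro a b hab
    refine ⟨fun f hf y hy => hf y (hL hab hy), ?_⟩
    rintro ⟨f, hf⟩ ⟨g, hg⟩ hfg
    obtain ⟨k, rfl⟩ := Nat.exists_eq_add_of_le hab
    have := hf _ (hc' a k)
    simp at hfg
    subst hfg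
    show f (c a) = f (c (a + k))
    rw [map_sub, sub_eq_zero] at this
    exact this.symm
  have hd : DirectedOn (· ≤ ·) (Set.range T) := by
    rw [directedOn_range]
    exact hT.directed_le
  obtain ⟨φ, hφ⟩ := inj_factor hE (LinearPMap.sSup _ hd).domain.subtype (LinearPMap.sSup _ hd).toFun
    (fun x hx => by
      have : x = 0 := Subtype.ext hx
      rw [this, map_zero])
  obtain ⟨x, hx⟩ := hM φ
  refine ⟨x, fun n => sep_sub hS _ _ fun g hg => ?_⟩
  have h1 := LinearPMap.le_sSup hd ⟨n, rfl⟩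
  have h2 := hφ ⟨g, h1.1 hg⟩
  have h3 := h1.2 (x := ⟨g, hg⟩) (y := ⟨g, h1.1 hg⟩) rfl
  have h4 : g (c n) = φ g := h3.trans h2.symm
  rw [map_sub, ← hx, h4, sub_self]

theorem flat_dual [IsNoetherianRing R] {E I : Type u} [AddCommGroup E] [Module R E]
    [AddCommGroup I] [Module R I]
    (hE : Module.Injective R E) (hI : Module.Injective R I) : Module.Flat R (I →ₗ[R] E) := by
  apply Module.Flat.of_forall_isTrivialRelation
  intro l f x hfx
  obtain ⟨n, s, hs⟩ := Submodule.fg_iff_exists_fin_generating_family.1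
    (IsNoetherian.noetherian (LinearMap.ker (Fintype.linearCombination R f)))
  let g : (Fin l → I) →ₗ[R] (Fin n → I) :=
    LinearMap.pi fun j => ∑ i, s j i • LinearMap.proj i
  let X : (Fin l → I) →ₗ[R] E := ∑ i, x i ∘ₗ LinearMap.proj i
  have hgv : ∀ v j, g v j = ∑ i, s j i • v i := fun v j => by simp [g]
  have hXv : ∀ v, X v = ∑ i, x i (v i) := fun v => by simp [X]
  obtain ⟨k, hk⟩ := inj_factor hE g X (fun v hv => by
    obtain ⟨w, hw⟩ := inj_factor hI (Fintype.linearCombination R f)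
      (Fintype.linearCombination R v) (fun c hc => by
        have hc' : c ∈ Submodule.span R (Set.range s) := by rw [hs]; exact hc
        have : Submodule.span R (Set.range s) ≤ LinearMap.ker (Fintype.linearCombination R v) := by
          rw [Submodule.span_le]
          rintro _ ⟨j, rfl⟩
          have := congr_fun hv j
          rw [hgv] at this
          simpa [Fintype.linearCombination_apply] using this
        exact this hc')
    have hv' : ∀ i, v i = f i • w 1 := fun i => by
      have := hw (Pi.single i 1)
      simp [Fintype.linearCombination_apply_single] at this
      rw [← this, ← map_smul]; simp
    rw [hXv]
    have := LinearMap.congr_fun hfx (w 1)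
    simp at this
    rw [← this]
    exact Finset.sum_congr rfl fun i _ => by rw [hv' i, map_smul])
  refine ⟨n, fun i j => s j i, fun j => k ∘ₗ LinearMap.single R (fun _ => I) j, fun i => ?_,
    fun j => ?_⟩
  · ext v
    have h1 := hk (Pi.single i v)
    rw [hXv, Finset.sum_eq_single i (fun b _ hb => by simp [Pi.single_eq_of_ne hb]) (by simp)] at h1
    simp only [Pi.single_eq_same] at h1
    rw [← h1]
    have h2 : g (Pi.single i v) = ∑ j, s j i • Pi.single j v := by
      ext j
      rw [hgv, Finset.sum_eq_single i (fun b _ hb => by simp [Pi.single_eq_of_ne hb]) (by simp)]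
      simp [Finset.sum_apply, Pi.single_apply]
    rw [h2]
    simp
  · have : s j ∈ LinearMap.ker (Fintype.linearCombination R f) := by
      rw [← hs]; exact Submodule.subset_span ⟨j, rfl⟩
    have := LinearMap.mem_ker.1 this
    rw [Fintype.linearCombination_apply] at this
    rw [← this]
    exact Finset.sum_congr rfl fun i _ => mul_comm _ _

theorem precover_dual [IsNoetherianRing R] {E M I : Type u} [AddCommGroup E] [Module R E]
    [AddCommGroup I] [Module R I] [AddCommGroup M] [Module R M] (i : M →ₗ[R] I)
    (hE : Module.Injective R E) (hI : Module.Injective R I) (hi : Function.Injective i) :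
    IsFlatPrecover R (LinearMap.lcomp R E i) := by
  refine ⟨flat_dual hE hI, fun F' _ _ hF g => ?_⟩
  obtain ⟨k, hk⟩ := hE.out (i.lTensor F') (Module.Flat.lTensor_preserves_injective_linearMap i hi)
    (TensorProduct.lift g)
  refine ⟨TensorProduct.curry k, ?_⟩
  ext x m
  simpa using hk (x ⊗ₜ[R] m)

theorem cover_step [IsNoetherianRing R] {E M I : Type u} [AddCommGroup E] [Module R E]
    [AddCommGroup I] [Module R I] [AddCommGroup M] [Module R M] (i : M →ₗ[R] I)
    (hE : Module.Injective R E) (hess : ∀ N : Submodule R I, N ≠ ⊥ → N ⊓ LinearMap.range i ≠ ⊥)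
    (d : (I →ₗ[R] E) →ₗ[R] (I →ₗ[R] E)) (hd : ∀ f m, d f (i m) = 0)
    (L : Submodule R I) (hL : L ≠ ⊤) :
    ∃ v, v ∉ L ∧ ∀ f : I →ₗ[R] E, (∀ y ∈ L, f y = 0) → d f v = 0 := by
  let C : I → Ideal R := fun v => (LinearMap.range i).comap (LinearMap.toSpanSingleton R I v)
  have hC : ∀ v c, c ∈ C v ↔ c • v ∈ LinearMap.range i := fun v c => by simp [C]
  obtain ⟨v0, hv0⟩ : ∃ v, v ∉ L := by
    by_contra! h
    exact hL (eq_top_iff.2 fun x _ => h x)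
  obtain ⟨_, ⟨v, hv, rfl⟩, hmax⟩ := set_has_maximal_iff_noetherian.2 (inferInstance : IsNoetherian R R)
    (C '' {v | v ∉ L}) ⟨_, v0, hv0, rfl⟩
  refine ⟨v, hv, fun f hf => ?_⟩
  obtain ⟨n, s, hs⟩ := Submodule.fg_iff_exists_fin_generating_family.1
    (IsNoetherian.noetherian (C v))
  let g : I →ₗ[R] (Fin n → I) := LinearMap.pi fun j => s j • LinearMap.id
  obtain ⟨k, hk⟩ := inj_factor hE g f (fun w hw => by
    by_contra hfw
    have hwL : w ∉ L := fun h => hfw (hf w h)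
    have hCw : ∀ c ∈ C v, c • w = 0 := by
      have : C v ≤ LinearMap.ker (LinearMap.toSpanSingleton R I w) := by
        rw [← hs, Submodule.span_le]
        rintro _ ⟨j, rfl⟩
        simpa [g] using congr_fun hw j
      intro c hc
      simpa using this hc
    have hle : C v ≤ C w := fun c hc => by rw [hC, hCw c hc]; exact zero_mem _
    have heq : C v = C w := by
      by_contra hne
      exact hmax _ ⟨w, hwL, rfl⟩ (lt_of_le_of_ne hle hne)
    have hw0 : w ≠ 0 := fun h => hfw (by simp [h])
    have := hess (Submodule.span R {w}) (by simpa using hw0)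
    obtain ⟨z, ⟨hz1, hz2⟩, hz0⟩ := (Submodule.ne_bot_iff _).1 this
    obtain ⟨c, rfl⟩ := Submodule.mem_span_singleton.1 hz1
    exact hz0 (hCw c (by rw [heq, hC]; exact hz2)))
  have hfe : f = ∑ j, s j • (k ∘ₗ LinearMap.single R (fun _ => I) j) := by
    ext w
    rw [← hk w]
    have h2 : g w = ∑ j, s j • Pi.single j w := by
      ext j
      simp [g, Finset.sum_apply, Pi.single_apply]
    rw [h2]; simp
  rw [hfe, map_sum, LinearMap.sum_apply]
  refine Finset.sum_eq_zero fun j _ => ?_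
  rw [map_smul, LinearMap.smul_apply, ← map_smul]
  have : s j ∈ C v := by rw [← hs]; exact Submodule.subset_span ⟨j, rfl⟩
  obtain ⟨m, hm⟩ := (hC _ _).1 this
  rw [← hm, hd]

theorem cover_bij [IsNoetherianRing R] {E M I : Type u} [AddCommGroup E] [Module R E]
    [AddCommGroup I] [Module R I] [AddCommGroup M] [Module R M] (i : M →ₗ[R] I)
    (hE : Module.Injective R E) (hess : ∀ N : Submodule R I, N ≠ ⊥ → N ⊓ LinearMap.range i ≠ ⊥)
    (d : (I →ₗ[R] E) →ₗ[R] (I →ₗ[R] E)) (hd : ∀ f m, d f (i m) = 0) :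
    (∀ g, g - d g = 0 → g = 0) ∧ ∀ f, ∃ g, g - d g = f := by
  let S : Set (Submodule R I) := {L |
    (∀ f : I →ₗ[R] E, (∀ y ∈ L, f y = 0) → ∀ y ∈ L, d f y = 0) ∧
    (∀ g : I →ₗ[R] E, (∀ y ∈ L, (g - d g) y = 0) → ∀ y ∈ L, g y = 0) ∧
    (∀ f : I →ₗ[R] E, ∃ g : I →ₗ[R] E, ∀ y ∈ L, (g - d g) y = f y)}
  have hbot : (⊥ : Submodule R I) ∈ S := by
    refine ⟨fun f _ y hy => ?_, fun g _ y hy => ?_, fun f => ⟨0, fun y hy => ?_⟩⟩ <;>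
    · rw [Submodule.mem_bot] at hy; simp [hy]
  obtain ⟨L, -, hLS, hLmax⟩ := zorn_le_nonempty₀ S (by
    intro c hcS hc y hy
    have hdir : DirectedOn (· ≤ ·) c := hc.directedOn
    have hmem : ∀ x, x ∈ sSup c ↔ ∃ L ∈ c, x ∈ L := fun x =>
      Submodule.mem_sSup_of_directed ⟨y, hy⟩ hdir
    refine ⟨sSup c, ⟨?_, ?_, ?_⟩, fun z hz => le_sSup hz⟩
    · intro f hf x hx
      obtain ⟨L, hL, hxL⟩ := (hmem x).1 hx
      exact (hcS hL).1 f (fun y hy => hf y ((hmem y).2 ⟨L, hL, hy⟩)) x hxL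
    · intro g hg x hx
      obtain ⟨L, hL, hxL⟩ := (hmem x).1 hx
      exact (hcS hL).2.1 g (fun y hy => hg y ((hmem y).2 ⟨L, hL, hy⟩)) x hxL
    · intro f
      have hex : ∀ L : c, ∃ g : I →ₗ[R] E, ∀ y ∈ L.1, (g - d g) y = f y :=
        fun L => (hcS L.2).2.2 f
      choose G hG using hex
      have hGG : ∀ L L' : c, L.1 ≤ L'.1 → ∀ y ∈ L.1, G L y = G L' y := by
        intro L L' h y hy
        have := (hcS L.2).2.1 (G L - G L') (fun z hz => by
          have h1 := hG L z hz
          have h2 := hG L' z (h hz)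
          simp only [map_sub, LinearMap.sub_apply] at h1 h2 ⊢
          rw [sub_sub_sub_comm, h1, h2, sub_self]) y hy
        simpa [sub_eq_zero] using this
      let T : c → (I →ₗ.[R] E) := fun L => ⟨L.1, G L ∘ₗ L.1.subtype⟩
      have hT : ∀ L L' : c, L.1 ≤ L'.1 → T L ≤ T L' := by
        intro L L' h
        refine ⟨h, ?_⟩
        rintro ⟨a, ha⟩ ⟨b, hb⟩ hab
        simp at hab
        subst hab
        exact hGG L L' h a ha
      have hd' : DirectedOn (· ≤ ·) (Set.range T) := by
        rw [directedOn_range]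
        intro a b
        rcases hc.total a.2 b.2 with h | h
        · exact ⟨b, hT _ _ h, le_rfl⟩
        · exact ⟨a, le_rfl, hT _ _ h⟩
      obtain ⟨φ, hφ⟩ := inj_factor hE (LinearPMap.sSup _ hd').domain.subtype
        (LinearPMap.sSup _ hd').toFun
        (fun x hx => by
          have : x = 0 := Subtype.ext hx
          rw [this, map_zero])
      have hφG : ∀ L : c, ∀ y ∈ L.1, φ y = G L y := by
        intro L y hy
        have h1 := LinearPMap.le_sSup hd' ⟨L, rfl⟩
        have h2 := hφ ⟨y, h1.1 hy⟩
        have h3 := h1.2 (x := ⟨y, hy⟩) (y := ⟨y, h1.1 hy⟩) rfl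
        exact h2.trans h3.symm
      refine ⟨φ, fun x hx => ?_⟩
      obtain ⟨L, hL, hxL⟩ := (hmem x).1 hx
      have h1 := (hcS hL).1 (φ - G ⟨L, hL⟩)
        (fun y hy => by simp [hφG ⟨L, hL⟩ y hy]) x hxL
      have h2 := hG ⟨L, hL⟩ x hxL
      rw [map_sub, LinearMap.sub_apply, sub_eq_zero] at h1
      rw [← h2, LinearMap.sub_apply, LinearMap.sub_apply, h1, hφG ⟨L, hL⟩ x hxL]) ⊥ hbot
  have htop : L = ⊤ := by
    by_contra hne
    obtain ⟨v, hv, hdv⟩ := cover_step i hE hess d hd L hne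
    let L' : Submodule R I :=
      { carrier := {w | ∀ f : I →ₗ[R] E, (∀ y ∈ L, f y = 0) → d f w = 0}
        add_mem' := fun ha hb f hf => by simp [ha f hf, hb f hf]
        zero_mem' := by simp
        smul_mem' := fun r a ha f hf => by simp [ha f hf] }
    have hL' : ∀ w ∈ L', ∀ f : I →ₗ[R] E, (∀ y ∈ L, f y = 0) → d f w = 0 := fun w hw => hw
    have hle : L ≤ L' := fun w hw f hf => hLS.1 f hf w hw
    have hS' : L' ∈ S := by
      refine ⟨fun f hf y hy => hL' y hy f fun z hz => hf z (hle hz), fun g hg y hy => ?_,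
        fun f => ?_⟩
      · have h1 := hLS.2.1 g (fun z hz => hg z (hle hz))
        have h2 := hL' y hy g h1
        simpa [h2] using hg y hy
      · obtain ⟨g0, hg0⟩ := hLS.2.2 f
        refine ⟨g0 + (f - (g0 - d g0)), fun y hy => ?_⟩
        have h1 := hL' y hy (f - (g0 - d g0)) (fun z hz => by
          rw [LinearMap.sub_apply, hg0 z hz, sub_self])
        rw [map_add, LinearMap.sub_apply, LinearMap.add_apply (d g0), h1]
        simp only [LinearMap.add_apply, LinearMap.sub_apply]
        abel
    exact hv (hLmax hS' hle (show v ∈ L' from hdv))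
  subst htop
  refine ⟨fun g hg => ?_, fun f => ?_⟩
  · ext y
    exact hLS.2.1 g (fun z _ => by rw [hg]; rfl) y trivial
  · obtain ⟨g, hg⟩ := hLS.2.2 f
    exact ⟨g, LinearMap.ext fun y => hg y trivial⟩

theorem flatCover_dual [IsNoetherianRing R] {E M I : Type u} [AddCommGroup E] [Module R E]
    [AddCommGroup I] [Module R I] [AddCommGroup M] [Module R M] (i : M →ₗ[R] I)
    (hE : Module.Injective R E) (hi : IsInjectiveEnvelope R i) :
    IsFlatCover R (LinearMap.lcomp R E i) := by
  refine ⟨precover_dual i hE hi.1 hi.2.1, fun h hh => ?_⟩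
  obtain ⟨h1, h2⟩ := cover_bij i hE hi.2.2 (LinearMap.id - h) (fun f m => by
    have := LinearMap.congr_fun (LinearMap.congr_fun hh f) m
    simp at this
    simp [this])
  have e : ∀ g, g - (LinearMap.id - h : (I →ₗ[R] E) →ₗ[R] (I →ₗ[R] E)) g = h g := fun g => by simp
  refine ⟨(injective_iff_map_eq_zero h).2 fun g hg => h1 g (by rw [e, hg]), fun f => ?_⟩
  obtain ⟨g, hg⟩ := h2 f
  exact ⟨g, by rw [← hg, e]⟩

theorem not_env {E M I : Type u} [AddCommGroup E] [Module R E] (hS : SepPts R E)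
    [AddCommGroup I] [Module R I] [AddCommGroup M] [Module R M] (i : M →ₗ[R] I)
    (hI : Module.Injective R I) (hM : IsMatlisReflexive R E M)
    (h : IsInjectiveEnvelope R (LinearMap.lcomp R E (LinearMap.lcomp R E i))) :
    IsMatlisReflexive R E I := by
  have hinj : Function.Injective (LinearMap.applyₗ : I →ₗ[R] ((I →ₗ[R] E) →ₗ[R] E)) := by
    rw [injective_iff_map_eq_zero]
    intro m hm
    by_contra hne
    obtain ⟨g, hg⟩ := hS I m hne
    exact hg (by simpa using LinearMap.congr_fun hm g)
  refine ⟨hinj, fun φ => ?_⟩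
  obtain ⟨ρ, hρ⟩ := hI.out _ hinj LinearMap.id
  have hker : LinearMap.ker ρ = ⊥ := by
    by_contra hne
    obtain ⟨z, ⟨hz1, ⟨ψ, rfl⟩⟩, hz0⟩ := (Submodule.ne_bot_iff _).1 (h.2.2 _ hne)
    obtain ⟨m, rfl⟩ := hM.2 ψ
    have h1 : (LinearMap.lcomp R E (LinearMap.lcomp R E i)) (LinearMap.applyₗ m)
        = LinearMap.applyₗ (i m) := by ext; simp
    rw [h1] at hz1 hz0
    have := hρ (i m)
    rw [LinearMap.mem_ker.1 hz1] at this
    exact hz0 (by rw [← LinearMap.id_apply (R := R) (i m), ← this, map_zero])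
  refine ⟨ρ φ, LinearMap.ker_eq_bot.1 hker ?_⟩
  simpa using hρ (ρ φ)

section Loc
variable [IsLocalRing R] {E : Type u} [AddCommGroup E] [Module R E]
  {jk : (R ⧸ IsLocalRing.maximalIdeal R) →ₗ[R] E}

open IsLocalRing

theorem sep_of_env (hjk : IsInjectiveEnvelope R jk) : SepPts R E := by
  intro N _ _ x hx
  obtain ⟨k, hk⟩ := inj_factor hjk.1 (LinearMap.toSpanSingleton R N x)
    (jk ∘ₗ (maximalIdeal R).mkQ) (fun r hr => by
      have hr' : r ∈ maximalIdeal R := by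
        by_contra h
        have hu : IsUnit r := by simpa using h
        exact hx (hu.smul_eq_zero.1 (by simpa using hr))
      rw [LinearMap.comp_apply, Submodule.mkQ_apply,
        (Submodule.Quotient.mk_eq_zero (maximalIdeal R)).2 hr', map_zero])
  refine ⟨k, fun h => ?_⟩
  have h1 := hk 1
  rw [LinearMap.toSpanSingleton_apply, one_smul, h] at h1
  have h2 := hjk.2.1 (h1.symm.trans (map_zero jk).symm)
  have h3 := (Submodule.Quotient.mk_eq_zero (maximalIdeal R)).1 h2
  exact (Ideal.ne_top_iff_one _).1 (maximalIdeal.isMaximal R).ne_top h3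

theorem socle_env (hjk : IsInjectiveEnvelope R jk) (v : E)
    (hv : ∀ r ∈ maximalIdeal R, r • v = 0) : v ∈ LinearMap.range jk := by
  by_cases h0 : v = 0
  · rw [h0]; exact zero_mem _
  obtain ⟨z, ⟨hz1, hz2⟩, hz0⟩ := (Submodule.ne_bot_iff _).1
    (hjk.2.2 (Submodule.span R {v}) (by simpa using h0))
  obtain ⟨c, rfl⟩ := Submodule.mem_span_singleton.1 hz1
  have hu : IsUnit c := by
    by_contra h
    exact hz0 (hv c (by simpa using h))
  obtain ⟨u, rfl⟩ := hu
  have := (LinearMap.range jk).smul_mem ((u⁻¹ : Rˣ) : R) hz2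
  simpa [smul_smul] using this

theorem refl_k (hjk : IsInjectiveEnvelope R jk) :
    IsMatlisReflexive R E (R ⧸ maximalIdeal R) := by
  rw [refl_iff (sep_of_env hjk)]
  intro φ
  have hk : ∀ r ∈ maximalIdeal R, ∀ a : R ⧸ maximalIdeal R, r • a = 0 := by
    intro r hr a
    obtain ⟨b, rfl⟩ := Submodule.mkQ_surjective _ a
    rw [← map_smul]
    exact (Submodule.Quotient.mk_eq_zero (maximalIdeal R)).2 (Ideal.mul_mem_right _ _ hr)
  obtain ⟨a, ha⟩ := socle_env hjk (φ jk) (fun r hr => by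
    rw [← map_smul]
    have : r • jk = 0 := by
      apply LinearMap.ext
      intro a
      rw [LinearMap.smul_apply, ← map_smul, hk r hr, map_zero, LinearMap.zero_apply]
    rw [this, map_zero])
  refine ⟨a, fun f => ?_⟩
  obtain ⟨b, hb⟩ := socle_env hjk (f (Submodule.Quotient.mk 1)) (fun r hr => by
    rw [← map_smul, hk r hr, map_zero])
  obtain ⟨b, rfl⟩ := Submodule.mkQ_surjective _ b
  have hf : f = b • jk := by
    apply LinearMap.ext
    intro c
    obtain ⟨c, rfl⟩ := Submodule.mkQ_surjective _ c
    have e1 : (maximalIdeal R).mkQ c = c • (maximalIdeal R).mkQ 1 := by rw [← map_smul]; simp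
    have e2 : (maximalIdeal R).mkQ b = b • (maximalIdeal R).mkQ 1 := by rw [← map_smul]; simp
    rw [e1, map_smul, map_smul, LinearMap.smul_apply, ← map_smul jk, ← e2, hb]
    rfl
  rw [hf, map_smul, ← ha, LinearMap.smul_apply]

theorem refl_finlen (hjk : IsInjectiveEnvelope R jk) (M : Type u) [AddCommGroup M] [Module R M]
    (h : IsFiniteLength R M) : IsMatlisReflexive R E M := by
  induction h with
  | of_subsingleton =>
    rw [refl_iff (sep_of_env hjk)]
    intro φ
    refine ⟨0, fun f => ?_⟩
    have : f = 0 := Subsingleton.elim _ _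
    simp [this]
  | @of_simple_quotient M _ _ N hs hN ih =>
    refine refl_ext hjk.1 (sep_of_env hjk) N ih ?_
    obtain ⟨I, hI, ⟨e⟩⟩ := isSimpleModule_iff_quot_maximal.1 hs
    have := IsLocalRing.eq_maximalIdeal hI
    subst this
    exact refl_surj hjk.1 (sep_of_env hjk) (refl_k hjk) e.symm.toLinearMap e.symm.surjective

variable [IsNoetherianRing R]

theorem refl_pow (hjk : IsInjectiveEnvelope R jk) (n : ℕ) :
    IsMatlisReflexive R E (R ⧸ maximalIdeal R ^ n) := by
  apply refl_finlen hjk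
  by_cases hn : n = 0
  · subst hn
    have : Subsingleton (R ⧸ maximalIdeal R ^ 0) := by
      rw [pow_zero, Ideal.one_eq_top]; infer_instance
    exact .of_subsingleton
  have := IsLocalRing.quotient_artinian_of_mem_minimalPrimes_of_isLocalRing (maximalIdeal R ^ n)
    ⟨⟨inferInstance, Ideal.pow_le_self hn⟩, fun P hP _ => hP.1.le_of_pow_le hP.2⟩
  rw [isFiniteLength_iff_isNoetherian_isArtinian]
  refine ⟨inferInstance, ?_⟩
  exact isArtinian_of_surjective_algebraMap (R := R ⧸ maximalIdeal R ^ n)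
    Ideal.Quotient.mk_surjective

theorem torsion_env (hjk : IsInjectiveEnvelope R jk) (v : E) :
    ∃ n, ∀ r ∈ maximalIdeal R ^ n, r • v = 0 := by
  let N := Submodule.span R {v}
  let N' : Submodule R N := (LinearMap.range jk).comap N.subtype
  obtain ⟨k, hk⟩ := (maximalIdeal R).exists_pow_inf_eq_pow_smul N'
  have h1 := hk (k + 1) (Nat.le_succ k)
  have h2 : (maximalIdeal R ^ (k + 1) • ⊤ ⊓ N' : Submodule R N) = ⊥ := by
    rw [h1, eq_bot_iff]
    refine Submodule.smul_le.2 ?_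
    rintro r hr ⟨x, hx⟩ ⟨-, hx'⟩
    obtain ⟨a, ha⟩ := hx'
    obtain ⟨a, rfl⟩ := Submodule.mkQ_surjective _ a
    have : r • x = 0 := by
      rw [show x = jk _ from ha.symm, ← map_smul, ← map_smul]
      have : r ∈ maximalIdeal R := by simpa using hr
      rw [show (maximalIdeal R).mkQ (r • a) = 0 from
        (Submodule.Quotient.mk_eq_zero (maximalIdeal R)).2 (Ideal.mul_mem_right _ _ this), map_zero]
    rw [Submodule.mem_bot]
    exact Subtype.ext this
  refine ⟨k + 1, fun r hr => ?_⟩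
  by_contra hne
  obtain ⟨z, ⟨hz1, hz2⟩, hz0⟩ := (Submodule.ne_bot_iff _).1
    (hjk.2.2 (Submodule.span R {r • v}) (by simpa using hne))
  obtain ⟨c, rfl⟩ := Submodule.mem_span_singleton.1 hz1
  let w : N := ⟨v, Submodule.mem_span_singleton_self v⟩
  have h3 : c • r • w ∈ (maximalIdeal R ^ (k + 1) • ⊤ ⊓ N' : Submodule R N) :=
    ⟨Submodule.smul_mem _ _ (Submodule.smul_mem_smul hr trivial), hz2⟩
  rw [h2, Submodule.mem_bot] at h3
  exact hz0 (congr_arg Subtype.val h3)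

theorem complete_of_refl (hjk : IsInjectiveEnvelope R jk) (h : IsMatlisReflexive R E R) :
    IsAdicComplete (maximalIdeal R) R := by
  have hH : IsHausdorff (maximalIdeal R) R := inferInstance
  have hP : IsPrecomplete (maximalIdeal R) R := by
    refine ⟨fun f hf => ?_⟩
    obtain ⟨x, hx⟩ := refl_lc hjk.1 (sep_of_env hjk) h (fun n => maximalIdeal R ^ n)
      (fun a b hab => Ideal.pow_le_pow_right hab) f (fun n => by
        have := (SModEq.sub_mem.1 (hf (Nat.le_succ n)).symm)
        simpa using this)
    refine ⟨x, fun n => SModEq.symm (SModEq.sub_mem.2 ?_)⟩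
    simpa using hx n
  exact ⟨⟩

theorem refl_of_complete (hjk : IsInjectiveEnvelope R jk) (h : IsAdicComplete (maximalIdeal R) R) :
    IsMatlisReflexive R E R := by
  rw [refl_iff (sep_of_env hjk)]
  intro φ
  have hn : ∀ n, ∃ r : R, ∀ f : R →ₗ[R] E, (∀ s ∈ maximalIdeal R ^ n, f s = 0) → φ f = f r := by
    intro n
    obtain ⟨q, hq⟩ := (refl_iff (sep_of_env hjk)).1 (refl_pow hjk n)
      (φ ∘ₗ LinearMap.lcomp R E (maximalIdeal R ^ n).mkQ)
    obtain ⟨r, rfl⟩ := Submodule.mkQ_surjective _ q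
    refine ⟨r, fun f hf => ?_⟩
    have h1 := hq ((maximalIdeal R ^ n).liftQ f hf)
    have h2 : (LinearMap.lcomp R E (maximalIdeal R ^ n).mkQ) ((maximalIdeal R ^ n).liftQ f hf) = f := rfl
    rw [LinearMap.comp_apply, h2] at h1
    rw [h1]; rfl
  choose r hr using hn
  obtain ⟨x, hx⟩ := h.toIsPrecomplete.prec' r (fun {m n} hmn => by
    refine SModEq.symm (SModEq.sub_mem.2 ?_)
    rw [smul_eq_mul, Ideal.mul_top]
    apply sep_sub (sep_of_env hjk)
    intro g hg
    rw [map_sub, ← hr m g hg, ← hr n g (fun s hs => hg s (Ideal.pow_le_pow_right hmn hs)), sub_self])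
  refine ⟨x, fun f => ?_⟩
  obtain ⟨n, hn⟩ := torsion_env hjk (f 1)
  have hf : ∀ s ∈ maximalIdeal R ^ n, f s = 0 := fun s hs => by
    rw [← hn s hs, ← map_smul, smul_eq_mul, mul_one]
  rw [hr n f hf, ← sub_eq_zero, ← map_sub]
  apply hf
  have := SModEq.sub_mem.1 (hx n)
  simpa using this

theorem complete_of_refl_E (hjk : IsInjectiveEnvelope R jk) (h : IsMatlisReflexive R E E) :
    IsAdicComplete (maximalIdeal R) R :=
  complete_of_refl hjk (refl_of_dual (sep_of_env hjk)
    (refl_surj hjk.1 (sep_of_env hjk) h (LinearMap.ringLmapEquivSelf R R E).symm.toLinearMap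
      (LinearMap.ringLmapEquivSelf R R E).symm.surjective))

end Loc

theorem exists_envelope (M : Type u) [AddCommGroup M] [Module R M] :
    ∃ (I : Type u) (_ : AddCommGroup I) (_ : Module R I) (i : M →ₗ[R] I),
      IsInjectiveEnvelope R i := by
  obtain ⟨J, _, _, hJ, i0, hi0⟩ : ∃ (J : Type u) (_ : AddCommGroup J) (_ : Module R J)
      (_ : Module.Injective R J) (i : M →ₗ[R] J), Function.Injective i := by
    obtain ⟨⟨P⟩⟩ := CategoryTheory.EnoughInjectives.presentation (ModuleCat.of R M)
    rename_i hP f hf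
    exact ⟨P, inferInstance, inferInstance, Module.injective_module_of_injective_object R P,
      f.hom, (ModuleCat.mono_iff_injective f).1 hf⟩
  let S : Set (Submodule R J) := {L | LinearMap.range i0 ≤ L ∧
    ∀ x ∈ L, x ≠ 0 → ∃ c : R, c • x ≠ 0 ∧ c • x ∈ LinearMap.range i0}
  obtain ⟨L, hL0, hLS, hLmax⟩ := zorn_le_nonempty₀ S (by
    intro c hcS hc y hy
    have hmem : ∀ x, x ∈ sSup c ↔ ∃ L ∈ c, x ∈ L := fun x =>
      Submodule.mem_sSup_of_directed ⟨y, hy⟩ hc.directedOn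
    refine ⟨sSup c, ⟨(hcS hy).1.trans (le_sSup hy), fun x hx hx0 => ?_⟩, fun z hz => le_sSup hz⟩
    obtain ⟨L, hL, hxL⟩ := (hmem x).1 hx
    exact (hcS hL).2 x hxL hx0) (LinearMap.range i0)
    ⟨le_rfl, fun x hx hx0 => ⟨1, by simpa using hx0, by simpa using hx⟩⟩
  obtain ⟨C, -, hCS, hCmax⟩ := zorn_le_nonempty₀ {C : Submodule R J | ∀ x ∈ C, x ∈ L → x = 0} (by
    intro c hcS hc y hy
    have hmem : ∀ x, x ∈ sSup c ↔ ∃ L ∈ c, x ∈ L := fun x =>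
      Submodule.mem_sSup_of_directed ⟨y, hy⟩ hc.directedOn
    refine ⟨sSup c, fun x hx hx0 => ?_, fun z hz => le_sSup hz⟩
    obtain ⟨L, hL, hxL⟩ := (hmem x).1 hx
    exact (hcS hL) x hxL hx0) ⊥ (by intro x hx _; simpa using hx)
  obtain ⟨h, hh⟩ := inj_factor hJ (C.mkQ ∘ₗ L.subtype) L.subtype (fun x hx => by
    exact hCS x ((Submodule.Quotient.mk_eq_zero C).1 hx) x.2)
  let H : J →ₗ[R] J := h ∘ₗ C.mkQ
  have hHL : ∀ x ∈ L, H x = x := fun x hx => hh ⟨x, hx⟩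
  have hHC : ∀ x ∈ C, H x = 0 := fun x hx => by
    show h (C.mkQ x) = 0
    rw [Submodule.mkQ_apply, (Submodule.Quotient.mk_eq_zero C).2 hx, map_zero]
  have hrange : LinearMap.range H ≤ L := by
    refine hLmax ⟨hLS.1.trans fun x hx => ⟨x, hHL x hx⟩, ?_⟩ fun x hx => ⟨x, hHL x hx⟩
    rintro _ ⟨w, rfl⟩ hw0
    -- the preimage of the span meets `L`
    have hex : ∃ z, H z ∈ Submodule.span R {H w} ∧ z ∈ L ∧ z ≠ 0 := by
      by_contra! hno
      have := hCmax (y := (Submodule.span R {H w}).comap H) (fun z hz hzL => hno z hz hzL)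
        (fun z hz => by
          rw [Submodule.mem_comap, hHC z hz]; exact zero_mem _)
      exact hw0 (hHC w (this (Submodule.mem_span_singleton_self _)))
    obtain ⟨z, hz1, hzL, hz0⟩ := hex
    rw [hHL z hzL] at hz1
    obtain ⟨c, rfl⟩ := Submodule.mem_span_singleton.1 hz1
    obtain ⟨c', h1, h2⟩ := hLS.2 _ hzL hz0
    exact ⟨c' * c, by rwa [mul_smul], by rwa [mul_smul]⟩
  refine ⟨L, inferInstance, inferInstance, i0.codRestrict L (fun m => hLS.1 ⟨m, rfl⟩), ⟨?_⟩, ?_, ?_⟩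
  · intro X Y _ _ _ _ f hf g
    obtain ⟨k, hk⟩ := hJ.out f hf (L.subtype ∘ₗ g)
    refine ⟨(H.codRestrict L fun x => hrange ⟨x, rfl⟩) ∘ₗ k, fun x => Subtype.ext ?_⟩
    show H (k (f x)) = g x
    rw [hk]
    exact hHL _ (g x).2
  · intro a b hab
    exact hi0 (congr_arg Subtype.val hab)
  · intro N hN
    obtain ⟨z, hz, hz0⟩ := (Submodule.ne_bot_iff _).1 hN
    obtain ⟨c, h1, m, hm⟩ := hLS.2 z.1 z.2 (fun h => hz0 (Subtype.ext h))
    refine (Submodule.ne_bot_iff _).2 ⟨c • z, ⟨N.smul_mem c hz, m, Subtype.ext hm⟩, fun h => ?_⟩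
    exact h1 (congr_arg Subtype.val h)

theorem exists_incomp [IsNoetherianRing R] (h : 2 ≤ ringKrullDim R) :
    ∃ (p q p1 : Ideal R) (x y : R), p.IsPrime ∧ q.IsPrime ∧ p1.IsPrime ∧ p ≤ q ∧ p ≤ p1 ∧
      x ∈ p1 ∧ x ∉ q ∧ y ∈ q ∧ y ∉ p1 := by
  obtain ⟨l, hl⟩ := (Order.le_krullDim_iff (n := 2)).1 h
  let P : Fin 3 → PrimeSpectrum R := fun j => l ⟨j, by omega⟩
  have hP : StrictMono P := fun a b hab => l.strictMono (Fin.mk_lt_mk.2 (Fin.lt_def.1 hab))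
  have h01 : (P 0).asIdeal < (P 1).asIdeal := hP (by decide)
  have h12 : (P 1).asIdeal < (P 2).asIdeal := hP (by decide)
  obtain ⟨y, hy2, hy1⟩ := SetLike.exists_of_lt h12
  obtain ⟨q, hq, hq2⟩ := Ideal.exists_minimalPrimes_le
    (show (P 0).asIdeal ⊔ Ideal.span {y} ≤ (P 2).asIdeal from
      sup_le (h01.le.trans h12.le) ((Ideal.span_singleton_le_iff_mem _).2 hy2))
  have hqp : q.IsPrime := hq.1.1
  have h0q : (P 0).asIdeal ≤ q := le_sup_left.trans hq.1.2
  have hyq : y ∈ q := (le_sup_right.trans hq.1.2) (Ideal.mem_span_singleton_self y)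
  have hnle : ¬ (P 1).asIdeal ≤ q := by
    intro hle
    have hlt : (P 1).asIdeal < q := lt_of_le_of_ne hle (fun h => hy1 (h ▸ hyq))
    have hht := Ideal.map_height_le_one_of_mem_minimalPrimes hq
    let f := Ideal.Quotient.mk (P 0).asIdeal
    have hsurj : Function.Surjective f := Ideal.Quotient.mk_surjective
    have hker : RingHom.ker f = (P 0).asIdeal := Ideal.mk_ker
    have hcm : ∀ J : Ideal R, (P 0).asIdeal ≤ J → (J.map f).comap f = J := fun J hJ => by
      rw [Ideal.comap_map_of_surjective' f hsurj, hker, sup_eq_left.2 hJ]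
    have i0 : ((P 0).asIdeal.map f).IsPrime :=
      Ideal.map_isPrime_of_surjective hsurj hker.le
    have i1 : ((P 1).asIdeal.map f).IsPrime :=
      Ideal.map_isPrime_of_surjective hsurj (hker.le.trans h01.le)
    have iq : (q.map f).IsPrime := Ideal.map_isPrime_of_surjective hsurj (hker.le.trans h0q)
    have l1 : (P 0).asIdeal.map f < (P 1).asIdeal.map f := by
      refine lt_of_le_of_ne (Ideal.map_mono h01.le) fun h => h01.ne ?_
      rw [← hcm _ le_rfl, h, hcm _ h01.le]
    have l2 : (P 1).asIdeal.map f < q.map f := by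
      refine lt_of_le_of_ne (Ideal.map_mono hle) fun h => hlt.ne ?_
      rw [← hcm _ h01.le, h, hcm _ h0q]
    have e1 := Ideal.height_add_one_le_of_lt_of_isPrime l1
    have e2 := Ideal.height_add_one_le_of_lt_of_isPrime l2
    have e3 := (e2.trans hht)
    have e4 : (1 : ℕ∞) ≤ ((P 1).asIdeal.map f).height := le_trans (by simp) e1
    have e5 : (1 : ℕ∞) + 1 ≤ 1 := le_trans (by gcongr) e3
    exact absurd e5 (by decide)
  obtain ⟨x, hx1, hxq⟩ := SetLike.not_le_iff_exists.1 hnle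
  exact ⟨_, q, _, x, y, (P 0).2, hqp, (P 1).2, h0q, h01.le, hx1, hxq, hyq, hy1⟩

theorem exists_loc [IsNoetherianRing R] {p q : Ideal R} (hp : p.IsPrime) (hq : q.IsPrime)
    (hpq : p ≤ q) (x y : R) (hx : x ∉ q) (hy : y ∈ q) :
    ∃ (A : Type u) (_ : CommRing A) (φ : R →+* A), RingHom.ker φ = p ∧ IsUnit (φ x) ∧
      (⨅ n : ℕ, Ideal.span {φ y} ^ n) = ⊥ := by
  let f := Ideal.Quotient.mk p
  have hsurj : Function.Surjective f := Ideal.Quotient.mk_surjective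
  have hker : RingHom.ker f = p := Ideal.mk_ker
  have hcm : (q.map f).comap f = q := by
    rw [Ideal.comap_map_of_surjective' f hsurj, hker, sup_eq_left.2 hpq]
  have iq : (q.map f).IsPrime := Ideal.map_isPrime_of_surjective hsurj (hker.le.trans hpq)
  let A := Localization.AtPrime (q.map f)
  have hN : IsNoetherianRing A := IsLocalization.isNoetherianRing (q.map f).primeCompl A inferInstance
  have hinj : Function.Injective (algebraMap (R ⧸ p) A) :=
    IsLocalization.injective A (q.map f).primeCompl_le_nonZeroDivisors
  refine ⟨A, inferInstance, (algebraMap (R ⧸ p) A).comp f, ?_, ?_, ?_⟩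
  · rw [← RingHom.comap_ker, (RingHom.injective_iff_ker_eq_bot _).1 hinj]
    exact hker
  · refine IsLocalization.map_units A (⟨f x, fun h => hx ?_⟩ : (q.map f).primeCompl)
    rw [← hcm]; exact h
  · apply Ideal.iInf_pow_eq_bot_of_isLocalRing
    intro htop
    have hu : IsUnit (algebraMap (R ⧸ p) A (f y)) := Ideal.span_singleton_eq_top.1 htop
    rw [IsLocalization.AtPrime.isUnit_to_map_iff A (q.map f)] at hu
    exact hu (Ideal.mem_map_of_mem f hy)

theorem claim_unit {E : Type u} [AddCommGroup E] [Module R E] (hE : Module.Injective R E)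
    (hS : SepPts R E) (hR : IsMatlisReflexive R E R) (K : ℕ → Ideal R) (hK : Antitone K)
    (p1 : Ideal R) (hp1 : p1.IsPrime) (hinf : ∀ r, (∀ f, r ∈ K f) → r ∈ p1) (x y : R)
    (hx : x ∈ p1) (hy : y ∉ p1) (hxK : ∀ f r, x * r ∈ K f → r ∈ K f) (e : ℕ) :
    ∃ f, e < f ∧ ∀ a c, IsUnit a → a * y ^ e + x * c ∉ K f := by
  by_contra! hcon
  have h1 : ∀ f, ∃ c, y ^ e + x * c ∈ K f := by
    intro f
    obtain ⟨a, c, ⟨u, rfl⟩, hac⟩ := hcon (max (e + 1) f) (by omega)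
    refine ⟨((u⁻¹ : Rˣ) : R) * c, ?_⟩
    have := (K f).mul_mem_left ((u⁻¹ : Rˣ) : R) (hK (le_max_right (e + 1) f) hac)
    convert this using 1
    have h0 : ((u⁻¹ : Rˣ) : R) * (u : R) = 1 := Units.inv_mul u
    linear_combination (-(y ^ e)) * h0
  choose c hc using h1
  obtain ⟨d, hd⟩ := refl_lc hE hS hR K hK c (fun n => by
    apply hxK
    have := (K n).sub_mem (hK (Nat.le_succ n) (hc (n + 1))) (hc n)
    convert this using 1
    ring)
  have h2 : y ^ e + x * d ∈ p1 := by
    apply hinf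
    intro f
    have := (K f).add_mem (hc f) ((K f).mul_mem_left x (hd f))
    convert this using 1
    ring
  exact hy (hp1.mem_of_pow_mem e (((p1).add_mem_iff_left (p1.mul_mem_right d hx)).1 h2))

theorem env_div {p : Ideal R} (hp : p.IsPrime) {I : Type u} [AddCommGroup I] [Module R I]
    (i : (R ⧸ p) →ₗ[R] I) (hi : IsInjectiveEnvelope R i) (s : R) (hs : s ∉ p) (v : I) :
    ∃ w : I, s • w = v := by
  have hker : LinearMap.ker (LinearMap.lsmul R I s) = ⊥ := by
    by_contra h
    apply hi.2.2 _ h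
    rw [Submodule.eq_bot_iff]
    rintro _ ⟨h1, ⟨a, rfl⟩⟩
    obtain ⟨r, rfl⟩ := Ideal.Quotient.mk_surjective a
    have h2 : s • i (Ideal.Quotient.mk p r) = 0 := h1
    rw [← map_smul] at h2
    have h3 : Ideal.Quotient.mk p (s * r) = 0 := hi.2.1 (h2.trans (map_zero i).symm)
    rw [Ideal.Quotient.eq_zero_iff_mem] at h3
    rw [Ideal.Quotient.eq_zero_iff_mem.2 ((hp.mem_or_mem h3).resolve_left hs), map_zero]
  obtain ⟨h, hh⟩ := hi.1.out (LinearMap.lsmul R I s) (LinearMap.ker_eq_bot.1 hker) LinearMap.id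
  refine ⟨h v, ?_⟩
  rw [← map_smul]
  exact hh v

theorem indep {p : Ideal R} {I : Type u} [AddCommGroup I] [Module R I]
    (i : (R ⧸ p) →ₗ[R] I) (hi : Function.Injective i) (K : ℕ → Ideal R) (hK : Antitone K)
    (hpK : ∀ f, p ≤ K f) (x y : R) (hyK : ∀ f, y ^ f ∈ K f)
    (hxK : ∀ f r, x * r ∈ K f → r ∈ K f) (e : ℕ → ℕ) (he : Monotone e)
    (hcl : ∀ n a c, IsUnit a → a * y ^ e n + x * c ∉ K (e (n + 1))) (z : ℕ → I)
    (hz : ∀ n, x ^ n • z n = y ^ e n • i (Ideal.Quotient.mk p 1)) (b : ℕ →₀ R)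
    (hb : Finsupp.linearCombination R z b = 0) (n : ℕ) : ¬ IsUnit (b n) := by
  intro hu
  obtain ⟨N0, hN0⟩ := b.support.exists_nat_subset_range
  let N := max N0 (n + 1)
  have hN : b.support ⊆ Finset.range N :=
    hN0.trans (Finset.range_subset_range.2 (le_max_left _ _))
  have hnN : n + 1 ≤ N := le_max_right _ _
  rw [Finsupp.linearCombination_apply, Finsupp.sum_of_support_subset _ hN _ (by simp)] at hb
  have hxK' : ∀ k f r, x ^ k * r ∈ K f → r ∈ K f := by
    intro k
    induction k with
    | zero => intro f r h; simpa using h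
    | succ k ih =>
      intro f r h
      apply ih
      apply hxK
      rw [← mul_assoc, ← pow_succ']
      exact h
  let t : ℕ → R := fun j => b j * (x ^ (N - j) * y ^ e j)
  have h1 : ∑ j ∈ Finset.range N, t j ∈ p := by
    rw [← Ideal.Quotient.eq_zero_iff_mem]
    apply hi
    rw [map_zero, ← smul_zero (x ^ N), ← hb, Finset.smul_sum, map_sum, map_sum]
    refine Finset.sum_congr rfl fun j hj => ?_
    have hj' := Finset.mem_range.1 hj
    have : Ideal.Quotient.mk p (t j) = (t j) • (Ideal.Quotient.mk p 1) := by
      rw [← mul_one (t j), map_mul]; simp [Algebra.smul_def]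
    rw [this, map_smul]
    have h3 : x ^ N = x ^ (N - j) * x ^ j := by rw [← pow_add]; congr 1; omega
    rw [smul_comm, h3, mul_smul (x ^ (N - j)), hz, smul_smul, smul_smul, mul_assoc]
  rw [← Finset.sum_range_add_sum_Ico t hnN] at h1
  have h2 : ∑ j ∈ Finset.Ico (n + 1) N, t j ∈ K (e (n + 1)) := by
    refine Ideal.sum_mem _ fun j hj => ?_
    refine Ideal.mul_mem_left _ _ (Ideal.mul_mem_left _ _ ?_)
    exact hK (he (Finset.mem_Ico.1 hj).1) (hyK (e j))
  have h4 := ((K (e (n + 1))).add_mem_iff_left h2).1 (hpK _ h1)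
  refine hcl n (b n) (∑ j ∈ Finset.range n, b j * (x ^ (n - 1 - j) * y ^ e j)) hu ?_
  apply hxK' (N - n)
  convert h4 using 1
  rw [Finset.sum_range_succ, mul_add, Finset.mul_sum, Finset.mul_sum, add_comm]
  congr 1
  · refine Finset.sum_congr rfl fun j hj => ?_
    have hj' := Finset.mem_range.1 hj
    have h3 : x ^ (N - j) = x ^ (N - n) * x * x ^ (n - 1 - j) := by
      rw [← pow_succ, ← pow_add]; congr 1; omega
    simp only [t, h3]
    ring
  · simp only [t]
    ring

theorem not_refl_of_indep [IsLocalRing R] {E : Type u} [AddCommGroup E] [Module R E]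
    (hE : Module.Injective R E) (hS : SepPts R E) {I : Type u} [AddCommGroup I] [Module R I]
    (z : ℕ → I)
    (hz : ∀ b : ℕ →₀ R, Finsupp.linearCombination R z b = 0 → ∀ n, ¬ IsUnit (b n)) :
    ¬ IsMatlisReflexive R E I := by
  intro hI
  let W : ℕ → Submodule R (ℕ →₀ R) := fun n =>
    { carrier := {a | ∀ j < n, a j ∈ IsLocalRing.maximalIdeal R}
      add_mem' := fun ha hb j hj => Ideal.add_mem _ (ha j hj) (hb j hj)
      zero_mem' := fun j hj => Ideal.zero_mem _
      smul_mem' := fun r a ha j hj => Ideal.mul_mem_left _ r (ha j hj) }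
  let T := Finsupp.linearCombination R z
  let d : ℕ → (ℕ →₀ R) := fun n => ∑ j ∈ Finset.range n, Finsupp.single j 1
  obtain ⟨X, hX⟩ := refl_lc hE hS hI (fun n => (W n).map T)
    (fun a b hab => Submodule.map_mono (fun w hw j hj => hw j (lt_of_lt_of_le hj hab)))
    (fun n => T (d n)) (fun n => by
      refine ⟨Finsupp.single n 1, fun j hj => ?_, ?_⟩
      · rw [Finsupp.single_apply, if_neg (by omega)]
        exact Ideal.zero_mem _
      · rw [← map_sub]
        simp only [d, Finset.sum_range_succ, add_sub_cancel_left])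
  obtain ⟨a, -, ha⟩ := hX 0
  have ha' : T a = X := by rw [ha]; simp [d]
  obtain ⟨N, hN⟩ := a.support.exists_notMem
  obtain ⟨w, hw, hwX⟩ := hX (N + 1)
  refine hz (a - d (N + 1) - w) ?_ N ?_
  · change T _ = 0
    rw [map_sub, map_sub, ha', hwX, sub_self]
  · have h1 : a N = 0 := by simpa using hN
    have h2 : (d (N + 1)) N = 1 := by
      simp [d, Finsupp.finsetSum_apply, Finsupp.single_apply]
    have h3 : (a - d (N + 1) - w) N = -(1 + w N) := by
      rw [Finsupp.sub_apply, Finsupp.sub_apply, h1, h2]; ring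
    rw [h3, IsUnit.neg_iff]
    have hm : w N ∈ IsLocalRing.maximalIdeal R := hw N (by omega)
    by_contra h
    have h5 : (1 + w N) ∈ IsLocalRing.maximalIdeal R := h
    have h6 := (Ideal.add_mem_iff_left _ hm).1 h5
    exact (Ideal.ne_top_iff_one _).1 (IsLocalRing.maximalIdeal.isMaximal R).ne_top h6

theorem not_refl_env [IsLocalRing R] [IsNoetherianRing R] {E : Type u} [AddCommGroup E]
    [Module R E] (hE : Module.Injective R E) (hS : SepPts R E) (hR : IsMatlisReflexive R E R)
    {p q p1 : Ideal R} {x y : R} (hp : p.IsPrime) (hq : q.IsPrime) (hp1 : p1.IsPrime)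
    (hpq : p ≤ q) (hpp1 : p ≤ p1) (hx1 : x ∈ p1) (hxq : x ∉ q) (hyq : y ∈ q) (hy1 : y ∉ p1)
    {I : Type u} [AddCommGroup I] [Module R I]
    (i : (R ⧸ p) →ₗ[R] I) (hi : IsInjectiveEnvelope R i) :
    ¬ IsMatlisReflexive R E I := by
  obtain ⟨A, _, φ, hker, hu, hinf⟩ := exists_loc hp hq hpq x y hxq hyq
  let K : ℕ → Ideal R := fun f => Ideal.comap φ (Ideal.span {φ y} ^ f)
  have hK : Antitone K := fun a b hab => Ideal.comap_mono (Ideal.pow_le_pow_right hab)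
  have hKinf : ∀ r, (∀ f, r ∈ K f) → r ∈ p := by
    intro r hr
    rw [← hker, RingHom.mem_ker, ← Ideal.mem_bot, ← hinf, Ideal.mem_iInf]
    exact hr
  have hpK : ∀ f, p ≤ K f := by
    intro f r hr
    rw [← hker, RingHom.mem_ker] at hr
    change φ r ∈ Ideal.span {φ y} ^ f
    rw [hr]
    exact Ideal.zero_mem _
  have hyK : ∀ f, y ^ f ∈ K f := by
    intro f
    change φ (y ^ f) ∈ Ideal.span {φ y} ^ f
    rw [map_pow]
    exact Ideal.pow_mem_pow (Ideal.mem_span_singleton_self _) f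
  have hxK : ∀ f r, x * r ∈ K f → r ∈ K f := by
    intro f r h
    change φ (x * r) ∈ Ideal.span {φ y} ^ f at h
    rw [map_mul, Ideal.unit_mul_mem_iff_mem _ hu] at h
    exact h
  choose F hF1 hF2 using claim_unit hE hS hR K hK p1 hp1 (fun r hr => hpp1 (hKinf r hr)) x y
    hx1 hy1 hxK
  let e : ℕ → ℕ := fun n => F^[n] 0
  have he1 : ∀ n, e (n + 1) = F (e n) := fun n => Function.iterate_succ_apply' F n 0
  have he : Monotone e := monotone_nat_of_le_succ fun n => by rw [he1]; exact (hF1 _).le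
  have hxp : ∀ n, x ^ n ∉ p := fun n h => hxq (hpq (hp.mem_of_pow_mem n h))
  choose z hz using fun n => env_div hp i hi (x ^ n) (hxp n)
    (y ^ e n • i (Ideal.Quotient.mk p 1))
  refine not_refl_of_indep hE hS z (indep i hi.2.1 K hK hpK x y hyK hxK e he ?_ z hz)
  intro n a c ha
  rw [he1]
  exact hF2 (e n) a c ha

end Helpers

/-- Let `(R, 𝔪)` be a Noetherian local ring that is not complete or
has Krull dimension at least `2`.  Then there exists an injective envelope `i : M → I`
with `M` Matlis reflexive and `I` not Matlis reflexive; and for every such `i` the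
Matlis dual `i^∨` is a flat cover but `(i^∨)^∨` is not an injective envelope.  Here
`E(k)` is presented by an injective envelope `jk : R/𝔪 → Ek`. -/
theorem exists_injectiveEnvelope_reflexive_to_nonreflexive
    [IsLocalRing R] [IsNoetherianRing R]
    (Ek : Type u) [AddCommGroup Ek] [Module R Ek]
    (jk : (R ⧸ IsLocalRing.maximalIdeal R) →ₗ[R] Ek) (hjk : IsInjectiveEnvelope R jk)
    (hR : ¬ IsAdicComplete (IsLocalRing.maximalIdeal R) R ∨ 2 ≤ ringKrullDim R) :
    (∃ (M I : Type u) (_ : AddCommGroup M) (_ : AddCommGroup I) (_ : Module R M)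
        (_ : Module R I) (i : M →ₗ[R] I),
        IsInjectiveEnvelope R i ∧ IsMatlisReflexive R Ek M ∧ ¬ IsMatlisReflexive R Ek I) ∧
      ∀ (M I : Type u) (_ : AddCommGroup M) (_ : AddCommGroup I) (_ : Module R M)
          (_ : Module R I) (i : M →ₗ[R] I),
        IsInjectiveEnvelope R i → IsMatlisReflexive R Ek M → ¬ IsMatlisReflexive R Ek I →
          IsFlatCover R (LinearMap.lcomp R Ek i) ∧
            ¬ IsInjectiveEnvelope R (LinearMap.lcomp R Ek (LinearMap.lcomp R Ek i)) := by
  refine ⟨?_, ?_⟩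
  · by_cases hc : IsAdicComplete (IsLocalRing.maximalIdeal R) R
    · have hd : 2 ≤ ringKrullDim R := hR.resolve_left (not_not_intro hc)
      obtain ⟨p, q, p1, x, y, hp, hq, hp1, hpq, hpp1, hx1, hxq, hyq, hy1⟩ := exists_incomp hd
      obtain ⟨I, _, _, i, hi⟩ := exists_envelope (R := R) (R ⧸ p)
      have hRR := refl_of_complete hjk hc
      exact ⟨R ⧸ p, I, inferInstance, inferInstance, inferInstance, inferInstance, i, hi,
        refl_surj hjk.1 (sep_of_env hjk) hRR (Submodule.mkQ p) (Submodule.mkQ_surjective p),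
        not_refl_env hjk.1 (sep_of_env hjk) hRR hp hq hp1 hpq hpp1 hx1 hxq hyq hy1 i hi⟩
    · exact ⟨R ⧸ IsLocalRing.maximalIdeal R, Ek, inferInstance, inferInstance, inferInstance,
        inferInstance, jk, hjk, refl_k hjk, fun h => hc (complete_of_refl_E hjk h)⟩
  · intro M I _ _ _ _ i hi hM hnot
    exact ⟨flatCover_dual i hjk.1 hi, fun h => hnot (not_env (sep_of_env hjk) i hi.1 hM h)⟩
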